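/- Let ⟨G, Eℓ⟩ be a two-player game graph with live edges, Q ⊆ V, and F = {F_1, …, F_s} a family of subsets of V, and let Z* := νY. ⋂_{b=1}^{s} μ X_b. ( Q ∩ [ (F_b ∩ Cpre(Y)) ∪ Apre(Y, X_b) ] ). Then for every b ∈ {1, …, s}, the least fixed point lfp( X ↦ Q ∩ [ (F_b ∩ Cpre(Z*)) ∪ Apre(Z*, X) ] ) equals Z*. -/

import Mathlib

/-- Least fixed point of a set transformer (Knaster–Tarski form). -/
def lfpSet {V : Type*} (f : Set V → Set V) : Set V := sInf {X | f X ⊆ X}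

/-- Greatest fixed point of a set transformer (Knaster–Tarski form). -/
def gfpSet {V : Type*} (f : Set V → Set V) : Set V := sSup {X | X ⊆ f X}

/-- A two-player game graph with live edges: vertices are partitioned into
Player-0 vertices `V0` and Player-1 vertices `V1`, every vertex has a successor,
and live edges `El` are Player-1 edges. -/
structure LiveGameGraph (V : Type*) where
  V0 : Set V
  V1 : Set V
  E : V → V → Prop
  El : V → V → Prop
  cover : V0 ∪ V1 = Set.univ
  disj : V0 ∩ V1 = ∅
  succ_nonempty : ∀ v : V, ∃ w, E v w
  live_sub : ∀ v w, El v w → v ∈ V1 ∧ E v w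

namespace LiveGameGraph

variable {V : Type*}

/-- Pre∃0(S) -/
def pre0 (Gm : LiveGameGraph V) (S : Set V) : Set V :=
  {v | v ∈ Gm.V0 ∧ ∃ w, Gm.E v w ∧ w ∈ S}

/-- Pre∀1(S) -/
def pre1 (Gm : LiveGameGraph V) (S : Set V) : Set V :=
  {v | v ∈ Gm.V1 ∧ ∀ w, Gm.E v w → w ∈ S}

/-- Cpre(S) -/
def cpre (Gm : LiveGameGraph V) (S : Set V) : Set V := Gm.pre0 S ∪ Gm.pre1 S

/-- Lpre∃(T) -/
def lpre (Gm : LiveGameGraph V) (T : Set V) : Set V :=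
  {v | ∃ w, Gm.El v w ∧ w ∈ T}

/-- Apre(S,T) -/
def apre (Gm : LiveGameGraph V) (S T : Set V) : Set V :=
  Gm.cpre T ∪ (Gm.lpre T ∩ Gm.pre1 S)

end LiveGameGraph

/-! Since `Apre(Y, Y) = Cpre(Y)`, at `X = Y` the inner operator takes the value `Q ∩ Cpre(Y)`,
whatever `b` is. A fixed point `Z` of the outer operator is the intersection of the inner least
fixed points `L_b`, so `Z ⊆ L_b`, and applying the inner operators to `Z` gives the common value
`Q ∩ Cpre(Z) ⊆ L_b` for all `b`, that is, `Q ∩ Cpre(Z) ⊆ Z`. Hence `Z` is a prefixed point of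
every inner operator, which forces `L_b ⊆ Z`. -/

theorem lfp_eq_of_iInf_lfp_eq {α : Type*} [CompleteLattice α] {ι : Sort*} {f : ι → α →o α}
    {z c : α} (hz : ⨅ i, (f i).lfp = z) (hc : ∀ i, f i z = c) (i : ι) : (f i).lfp = z := by
  have z_le_lfp (j : ι) : z ≤ (f j).lfp := hz ▸ iInf_le _ j
  have c_le_lfp (j : ι) : c ≤ (f j).lfp := hc j ▸ (f j).map_le_lfp (z_le_lfp j)
  have c_le : c ≤ z := hz ▸ le_iInf c_le_lfp
  exact le_antisymm ((f i).lfp_le ((hc i).trans_le c_le)) (z_le_lfp i)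

theorem map_gfpSet {V : Type*} {f : Set V → Set V} (hf : Monotone f) :
    f (gfpSet f) = gfpSet f :=
  OrderHom.map_gfp ⟨f, hf⟩

namespace LiveGameGraph

variable {V : Type*} (Gm : LiveGameGraph V)

theorem pre0_mono : Monotone Gm.pre0 :=
  fun _ _ hST _ ⟨hv, w, hvw, hw⟩ => ⟨hv, w, hvw, hST hw⟩

theorem pre1_mono : Monotone Gm.pre1 :=
  fun _ _ hST _ ⟨hv, hsucc⟩ => ⟨hv, fun w hvw => hST (hsucc w hvw)⟩

theorem cpre_mono : Monotone Gm.cpre :=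
  fun _ _ hST => Set.union_subset_union (Gm.pre0_mono hST) (Gm.pre1_mono hST)

theorem lpre_mono : Monotone Gm.lpre :=
  fun _ _ hST _ ⟨w, hvw, hw⟩ => ⟨w, hvw, hST hw⟩

theorem apre_mono {S S' T T' : Set V} (hS : S ⊆ S') (hT : T ⊆ T') :
    Gm.apre S T ⊆ Gm.apre S' T' :=
  Set.union_subset_union (Gm.cpre_mono hT)
    (Set.inter_subset_inter (Gm.lpre_mono hT) (Gm.pre1_mono hS))

theorem apre_self (S : Set V) : Gm.apre S S = Gm.cpre S :=
  Set.union_eq_self_of_subset_right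
    (Set.inter_subset_right.trans Set.subset_union_right)

/-- The inner operator `X ↦ Q ∩ [(B ∩ Cpre(Y)) ∪ Apre(Y, X)]` of the generalized Büchi fixpoint
expression, for a single goal set `B`. It is bundled as a monotone function of `Y` with values in
monotone functions of `X`, so that `OrderHom.lfp` applies to it. -/
def buchiStep (Q B : Set V) : Set V →o Set V →o Set V where
  toFun Y :=
    { toFun := fun X => Q ∩ ((B ∩ Gm.cpre Y) ∪ Gm.apre Y X)
      monotone' := fun _ _ hX => Set.inter_subset_inter_right Q
        (Set.union_subset_union_right _ (Gm.apre_mono subset_rfl hX)) }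
  monotone' _ _ hY _ := Set.inter_subset_inter_right Q
    (Set.union_subset_union (Set.inter_subset_inter_right B (Gm.cpre_mono hY))
      (Gm.apre_mono hY subset_rfl))

theorem buchiStep_self (Q B Y : Set V) : Gm.buchiStep Q B Y Y = Q ∩ Gm.cpre Y := by
  change Q ∩ ((B ∩ Gm.cpre Y) ∪ Gm.apre Y Y) = Q ∩ Gm.cpre Y
  rw [apre_self, Set.union_eq_self_of_subset_left Set.inter_subset_right]

theorem biInter_lfpSet_buchiStep_mono {ι : Type*} (Q : Set V) (F : ι → Set V) (I : Set ι) :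
    Monotone fun Y => ⋂ b ∈ I, lfpSet (Gm.buchiStep Q (F b) Y) :=
  fun _ _ hY => Set.iInter₂_mono fun b _ => OrderHom.lfp.mono ((Gm.buchiStep Q (F b)).mono hY)

end LiveGameGraph

theorem gen_buchi_inner_lfp_eq_general {V ι : Type*} (Gm : LiveGameGraph V) (Q : Set V)
    (I : Set ι) (F : ι → Set V) (Z : Set V)
    (hZ : ⋂ b ∈ I, lfpSet (fun X => Q ∩ ((F b ∩ Gm.cpre Z) ∪ Gm.apre Z X)) = Z) :
    ∀ b ∈ I, lfpSet (fun X => Q ∩ ((F b ∩ Gm.cpre Z) ∪ Gm.apre Z X)) = Z :=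
  fun b hb => lfp_eq_of_iInf_lfp_eq (f := fun b : I => Gm.buchiStep Q (F b) Z)
    ((Set.iInter_subtype _ _).trans hZ) (fun b => Gm.buchiStep_self Q (F b) Z) ⟨b, hb⟩

/-- for every b, lfp(X ↦ Q ∩ [(F_b ∩ Cpre(Z*)) ∪ Apre(Z*,X)]) = Z*. -/
theorem gen_buchi_inner_lfp_eq {V : Type*} [Fintype V]
    (Gm : LiveGameGraph V) (Q : Set V) (s : ℕ) (F : ℕ → Set V) (Zstar : Set V)
    (hZ : Zstar = gfpSet fun Y => ⋂ b ∈ Finset.Icc 1 s, lfpSet fun X =>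
      Q ∩ ((F b ∩ Gm.cpre Y) ∪ Gm.apre Y X)) :
    ∀ b ∈ Finset.Icc 1 s,
      lfpSet (fun X => Q ∩ ((F b ∩ Gm.cpre Zstar) ∪ Gm.apre Zstar X)) = Zstar := by
  have hmono := Gm.biInter_lfpSet_buchiStep_mono Q F (Finset.Icc 1 s)
  exact gen_buchi_inner_lfp_eq_general Gm Q (Finset.Icc 1 s) F Zstar (hZ ▸ map_gfpSet hmono)
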